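/- Fix m > 0, α > 0, 0 < R₁ < R₂ < R, P_T > 0, 𝒩 > 0, reflection coefficients 0 < ξ₂ ≤ ξ₁, κ = ξ₂/ξ₁, and a threshold γ > 0. Let X₁ = g₁²·r₁^{−2α} and X₂ = g₂²·r₂^{−2α} be independent, where g₁, g₂ have Gamma density m^m·g^{m−1}·e^{−m·g}/Γ(m), r₁ has density 2r/(R₂² − R₁²) on [R₁, R₂] and r₂ has density 2r/(R² − R₂²) on [R₂, R]. Let Φ^A, φ^A be the CDF and density of X₁ and Φ^B, φ^B the CDF and density of X₂, and define p₁ = P( [ξ₁X₁ ≥ ξ₂X₂ and P_Tξ₁X₁ ≥ γ(P_Tξ₂X₂ + 𝒩) and P_Tξ₂X₂ < γ𝒩] or [ξ₁X₁ < ξ₂X₂ and P_Tξ₂X₂ ≥ γ(P_Tξ₁X₁ + 𝒩) and P_Tξ₁X₁ < γ𝒩] ). Then p₁ = ∫_{0}^{𝒩γ/(P_Tξ₂)} (1 − Φ^A(γκx + 𝒩γ/(P_Tξ₁)))·φ^B(x) dx + ∫_{0}^{𝒩γ/(P_Tξ₁)} (1 − Φ^B(γx/κ + 𝒩γ/(P_Tξ₂)))·φ^A(x)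 dx. -/

import Mathlib

open MeasureTheory Set Real

/-- The CDF `Φ(x) = P(g²·r^{−2α} < x)` of the composite variable, where `g` has Gamma
density `m^m g^{m−1} e^{−mg}/Γ(m)` on `(0,∞)` and `r` independently has density
`2r/(R_u² − R_l²)` on `[R_l, R_u]`, expressed as the double integral of the joint
density over the event. -/
noncomputable def compositeCDF (m α Rl Ru x : ℝ) : ℝ :=
  ∫ g in Set.Ioi (0 : ℝ), ∫ r in Rl..Ru,
    if g ^ 2 * r ^ (-(2 * α)) < x
    then m ^ m * g ^ (m - 1) * Real.exp (-m * g) / Real.Gamma m *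
      (2 * r / (Ru ^ 2 - Rl ^ 2)) else 0

/-!
Each composite variable has a law on `(0, ∞)`; as its distribution function is differentiable
there, the law is the derivative times Lebesgue measure. If the weaker signal `w` fails,
`w < γ𝒩`, while the stronger one passes, `γ(w + 𝒩) ≤ s`, then `w < s` automatically. Hence each
of the two disjoint alternatives is a region `{x < b, t(x) ≤ y}` with `t` affine, and Fubini
integrates the tail `1 - Φ(t(x))` of one variable against the density of the other.
-/

open ProbabilityTheory Filter

section DistributionFunction

theorem measure_ext_of_Iio {β : Type*} [TopologicalSpace β] [MeasurableSpace β]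
    [SecondCountableTopology β] [ConditionallyCompleteLinearOrder β] [OrderTopology β]
    [BorelSpace β] [NoMaxOrder β] {μ ν : Measure β} [IsFiniteMeasure μ]
    (h : ∀ b, μ (Iio b) = ν (Iio b)) : μ = ν := by
  refine Measure.ext_of_Ico μ ν fun a b hab => ?_
  have hIco : Ico a b = Iio b \ Iio a := by
    ext x
    simp
  rw [hIco, measure_sdiff (Iio_subset_Iio hab.le) nullMeasurableSet_Iio (measure_ne_top μ _),
    measure_sdiff (Iio_subset_Iio hab.le) nullMeasurableSet_Iio (h a ▸ measure_ne_top μ _), h, h]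

theorem measure_Iic_eq_zero_of_ae_gt {β : Type*} [MeasurableSpace β] [LinearOrder β]
    {μ : Measure β} {a : β} (hμ : ∀ᵐ x ∂μ, a < x) : μ (Iic a) = 0 := by
  simpa [ae_iff, Iic] using hμ

theorem measureReal_Iio_eq_zero_of_ae_gt {β : Type*} [MeasurableSpace β] [LinearOrder β]
    {μ : Measure β} {a : β} (hμ : ∀ᵐ x ∂μ, a < x) : μ.real (Iio a) = 0 := by
  rw [measureReal_def, measure_mono_null Iio_subset_Iic_self (measure_Iic_eq_zero_of_ae_gt hμ),
    ENNReal.toReal_zero]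

variable {μ : Measure ℝ} [IsFiniteMeasure μ] {a b : ℝ} {φ : ℝ → ℝ}

theorem tendsto_measureReal_Iio_nhdsGT_zero (hμ : ∀ᵐ x ∂μ, a < x) :
    Tendsto (fun x => μ.real (Iio x)) (nhdsWithin a (Ioi a)) (nhds 0) := by
  have hInter : ⋂ x > a, Iio x = Iic a := by
    ext y
    simpa using forall_gt_iff_le
  have hlim := tendsto_measure_biInter_gt (μ := μ) (s := Iio) (a := a)
    (fun _ _ => nullMeasurableSet_Iio) (fun _ _ _ hij => Iio_subset_Iio hij)
    ⟨a + 1, lt_add_one a, measure_ne_top μ _⟩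
  rw [hInter, measure_Iic_eq_zero_of_ae_gt hμ] at hlim
  exact (ENNReal.tendsto_toReal ENNReal.zero_ne_top).comp hlim

theorem nonneg_of_hasDerivAt_measureReal_Iio
    (hφ : ∀ x, a < x → HasDerivAt (fun x => μ.real (Iio x)) (φ x) x) {x : ℝ} (hx : a < x) :
    0 ≤ φ x := by
  have hmono : Monotone fun x => μ.real (Iio x) :=
    fun _ _ hxy => measureReal_mono (Iio_subset_Iio hxy)
  exact (hφ x hx).deriv ▸ hmono.deriv_nonneg

theorem aemeasurable_of_hasDerivAt_Ioi {Φ : ℝ → ℝ} (hφ : ∀ x, a < x → HasDerivAt Φ (φ x) x) :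
    AEMeasurable φ (volume.restrict (Ioi a)) :=
  ⟨deriv Φ, measurable_deriv Φ, (ae_restrict_iff' measurableSet_Ioi).2 <|
    ae_of_all _ fun x hx => (hφ x hx).deriv.symm⟩

theorem continuousOn_measureReal_Iio (hμ : ∀ᵐ x ∂μ, a < x)
    (hφ : ∀ x, a < x → HasDerivAt (fun x => μ.real (Iio x)) (φ x) x) :
    ContinuousOn (fun x => μ.real (Iio x)) (Ici a) := by
  intro x hx
  rcases (mem_Ici.1 hx).eq_or_lt with rfl | hax
  · refine continuousWithinAt_Ioi_iff_Ici.1 ?_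
    rw [ContinuousWithinAt, measureReal_Iio_eq_zero_of_ae_gt hμ]
    exact tendsto_measureReal_Iio_nhdsGT_zero hμ
  · exact (hφ x hax).continuousAt.continuousWithinAt

theorem lintegral_Ioo_ofReal_eq_measure_Iio (hμ : ∀ᵐ x ∂μ, a < x)
    (hφ : ∀ x, a < x → HasDerivAt (fun x => μ.real (Iio x)) (φ x) x) (hab : a < b) :
    ∫⁻ x in Ioo a b, ENNReal.ofReal (φ x) = μ (Iio b) := by
  have hnonneg : ∀ x ∈ Ioo a b, 0 ≤ φ x :=
    fun x hx => nonneg_of_hasDerivAt_measureReal_Iio hφ hx.1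
  have hderiv : ∀ x ∈ Ioo a b, HasDerivAt (fun x => μ.real (Iio x)) (φ x) x :=
    fun x hx => hφ x hx.1
  have hcont : ContinuousOn (fun x => μ.real (Iio x)) (Icc a b) :=
    (continuousOn_measureReal_Iio hμ hφ).mono Icc_subset_Ici_self
  have hint : IntegrableOn φ (Ioc a b) :=
    intervalIntegral.integrableOn_deriv_of_nonneg hcont hderiv hnonneg
  have hftc : ∫ x in Ioo a b, φ x = μ.real (Iio b) := by
    rw [← integral_Ioc_eq_integral_Ioo, ← intervalIntegral.integral_of_le hab.le,
      intervalIntegral.integral_eq_sub_of_hasDerivAt_of_le hab.le hcont hderiv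
        ((intervalIntegrable_iff_integrableOn_Ioc_of_le hab.le).2 hint),
      measureReal_Iio_eq_zero_of_ae_gt hμ, sub_zero]
  rw [← ofReal_integral_eq_lintegral_ofReal (hint.mono_set Ioo_subset_Ioc_self)
    ((ae_restrict_iff' measurableSet_Ioo).2 (ae_of_all _ hnonneg)), hftc, ofReal_measureReal]

theorem eq_withDensity_of_hasDerivAt_measureReal_Iio (hμ : ∀ᵐ x ∂μ, a < x)
    (hφ : ∀ x, a < x → HasDerivAt (fun x => μ.real (Iio x)) (φ x) x) :
    μ = (volume.restrict (Ioi a)).withDensity fun x => ENNReal.ofReal (φ x) := by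
  refine measure_ext_of_Iio fun b => ?_
  rw [withDensity_apply _ measurableSet_Iio, Measure.restrict_restrict measurableSet_Iio,
    inter_comm, Ioi_inter_Iio]
  rcases le_or_gt b a with hba | hab
  · rw [Ioo_eq_empty hba.not_gt, setLIntegral_empty]
    exact measure_mono_null (Iio_subset_Iic hba) (measure_Iic_eq_zero_of_ae_gt hμ)
  · exact (lintegral_Ioo_ofReal_eq_measure_Iio hμ hφ hab).symm

theorem setIntegral_Iio_eq_intervalIntegral_mul (hμ : ∀ᵐ x ∂μ, a < x)
    (hφ : ∀ x, a < x → HasDerivAt (fun x => μ.real (Iio x)) (φ x) x) (hab : a ≤ b) (F : ℝ → ℝ) :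
    ∫ x in Iio b, F x ∂μ = ∫ x in a..b, F x * φ x := by
  have hφ_meas := (aemeasurable_of_hasDerivAt_Ioi hφ).ennreal_ofReal
  rw [eq_withDensity_of_hasDerivAt_measureReal_Iio hμ hφ,
    setIntegral_withDensity_eq_setIntegral_toReal_smul₀ hφ_meas.restrict
      (ae_of_all _ fun _ => ENNReal.ofReal_lt_top) _ measurableSet_Iio,
    Measure.restrict_restrict measurableSet_Iio, inter_comm, Ioi_inter_Iio,
    intervalIntegral.integral_of_le hab, integral_Ioc_eq_integral_Ioo]
  refine setIntegral_congr_fun measurableSet_Ioo fun x hx => ?_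
  simp only [ENNReal.toReal_ofReal (nonneg_of_hasDerivAt_measureReal_Iio hφ hx.1), smul_eq_mul,
    mul_comm]

theorem measureReal_prod_eq_integral {β γ : Type*} [MeasurableSpace β] [MeasurableSpace γ]
    (μ : Measure β) (ν : Measure γ) [IsFiniteMeasure ν] {s : Set (β × γ)}
    (hs : MeasurableSet s) :
    (μ.prod ν).real s = ∫ x, ν.real (Prod.mk x ⁻¹' s) ∂μ := by
  simp only [measureReal_def, Measure.prod_apply hs]
  exact (integral_toReal (measurable_measure_prodMk_left hs).aemeasurable
    (ae_of_all _ fun _ => measure_lt_top ν _)).symm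

theorem measureReal_prod_le_and_lt {ν : Measure ℝ} [IsProbabilityMeasure ν]
    (hμ : ∀ᵐ x ∂μ, a < x) (hφ : ∀ x, a < x → HasDerivAt (fun x => μ.real (Iio x)) (φ x) x)
    (hab : a ≤ b) {t : ℝ → ℝ} (ht : Measurable t) :
    (μ.prod ν).real {p | t p.1 ≤ p.2 ∧ p.1 < b} =
      ∫ x in a..b, (1 - ν.real (Iio (t x))) * φ x := by
  have hmeas : MeasurableSet {p : ℝ × ℝ | t p.1 ≤ p.2 ∧ p.1 < b} :=
    (measurableSet_le (ht.comp measurable_fst) measurable_snd).inter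
      (measurableSet_lt measurable_fst measurable_const)
  rw [← setIntegral_Iio_eq_intervalIntegral_mul hμ hφ hab fun x => 1 - ν.real (Iio (t x)),
    ← integral_indicator measurableSet_Iio, measureReal_prod_eq_integral μ ν hmeas]
  congr 1 with x
  by_cases hx : x < b
  · have hsection : Prod.mk x ⁻¹' {p : ℝ × ℝ | t p.1 ≤ p.2 ∧ p.1 < b} = (Iio (t x))ᶜ := by
      ext y
      simp [hx]
    rw [hsection, probReal_compl_eq_one_sub measurableSet_Iio, indicator_of_mem (mem_Iio.2 hx)]
  · simp [hx]

end DistributionFunction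

section Decoding

/-- The pairs `(x, y)` for which a signal of power `PT * ξ₂ * y` passes the SINR test against
the interference `PT * ξ₁ * x`, while the interferer itself fails the SNR test. -/
def decodedDespiteInterference (PT Noise γ ξ₁ ξ₂ : ℝ) : Set (ℝ × ℝ) :=
  {p | γ * (PT * ξ₁ * p.1 + Noise) ≤ PT * ξ₂ * p.2 ∧ PT * ξ₁ * p.1 < γ * Noise}

/-- The values `(x, y)` of the near and far composite variables for which the near signal is
the stronger one and the only one decoded. Ties in power count as the near one being stronger. -/
def nearStrongerOnlyDecoded (PT Noise γ ξ₁ ξ₂ : ℝ) : Set (ℝ × ℝ) :=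
  {p | ξ₂ * p.2 ≤ ξ₁ * p.1 ∧ γ * (PT * ξ₂ * p.2 + Noise) ≤ PT * ξ₁ * p.1 ∧
    PT * ξ₂ * p.2 < γ * Noise}

/-- The values `(x, y)` of the near and far composite variables for which the far signal is
strictly stronger and the only one decoded. -/
def farStrongerOnlyDecoded (PT Noise γ ξ₁ ξ₂ : ℝ) : Set (ℝ × ℝ) :=
  {p | ξ₁ * p.1 < ξ₂ * p.2 ∧ γ * (PT * ξ₁ * p.1 + Noise) ≤ PT * ξ₂ * p.2 ∧
    PT * ξ₁ * p.1 < γ * Noise}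

theorem measurableSet_decodedDespiteInterference (PT Noise γ ξ₁ ξ₂ : ℝ) :
    MeasurableSet (decodedDespiteInterference PT Noise γ ξ₁ ξ₂) := by
  unfold decodedDespiteInterference
  measurability

theorem measurableSet_nearStrongerOnlyDecoded (PT Noise γ ξ₁ ξ₂ : ℝ) :
    MeasurableSet (nearStrongerOnlyDecoded PT Noise γ ξ₁ ξ₂) := by
  unfold nearStrongerOnlyDecoded
  measurability

theorem measurableSet_farStrongerOnlyDecoded (PT Noise γ ξ₁ ξ₂ : ℝ) :
    MeasurableSet (farStrongerOnlyDecoded PT Noise γ ξ₁ ξ₂) := by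
  unfold farStrongerOnlyDecoded
  measurability

variable {PT Noise γ ξ₁ ξ₂ ξ x y : ℝ}

theorem mul_lt_mul_of_sinr_ge_of_snr_lt (hPT : 0 < PT) (hγ : 0 ≤ γ) (hξ₂ : 0 ≤ ξ₂) (hy : 0 ≤ y)
    (hsinr : γ * (PT * ξ₂ * y + Noise) ≤ PT * ξ₁ * x) (hsnr : PT * ξ₂ * y < γ * Noise) :
    ξ₂ * y < ξ₁ * x := by
  have hinterference : 0 ≤ γ * (PT * ξ₂ * y) := by positivity
  exact lt_of_mul_lt_mul_left (by linarith) hPT.le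

theorem sinr_ge_iff (hPT : 0 < PT) (hξ₁ : 0 < ξ₁) :
    γ * (PT * ξ₂ * y + Noise) ≤ PT * ξ₁ * x ↔
      γ * (ξ₂ / ξ₁) * y + Noise * γ / (PT * ξ₁) ≤ x := by
  have hthreshold : γ * (ξ₂ / ξ₁) * y + Noise * γ / (PT * ξ₁) =
      γ * (PT * ξ₂ * y + Noise) / (PT * ξ₁) := by
    field_simp
  rw [hthreshold, div_le_iff₀ (by positivity), mul_comm x]

theorem snr_lt_iff (hPT : 0 < PT) (hξ : 0 < ξ) :
    PT * ξ * y < γ * Noise ↔ y < Noise * γ / (PT * ξ) := by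
  rw [lt_div_iff₀ (by positivity), mul_comm y, mul_comm Noise]

variable {μ ν : Measure ℝ} {φ ψ : ℝ → ℝ}

theorem farStrongerOnlyDecoded_ae_eq (hPT : 0 < PT) (hγ : 0 ≤ γ) (hξ₁ : 0 ≤ ξ₁)
    (hμ : ∀ᵐ x ∂μ, 0 < x) :
    farStrongerOnlyDecoded PT Noise γ ξ₁ ξ₂ =ᵐ[μ.prod ν]
      decodedDespiteInterference PT Noise γ ξ₁ ξ₂ := by
  filter_upwards [Measure.quasiMeasurePreserving_fst.ae hμ] with p hp
  exact propext ⟨And.right, fun h =>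
    ⟨mul_lt_mul_of_sinr_ge_of_snr_lt hPT hγ hξ₁ hp.le h.1 h.2, h⟩⟩

theorem nearStrongerOnlyDecoded_ae_eq (hPT : 0 < PT) (hγ : 0 ≤ γ) (hξ₂ : 0 ≤ ξ₂)
    (hν : ∀ᵐ y ∂ν, 0 < y) :
    nearStrongerOnlyDecoded PT Noise γ ξ₁ ξ₂ =ᵐ[μ.prod ν]
      Prod.swap ⁻¹' decodedDespiteInterference PT Noise γ ξ₂ ξ₁ := by
  filter_upwards [Measure.quasiMeasurePreserving_snd.ae hν] with p hp
  exact propext ⟨And.right, fun h =>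
    ⟨(mul_lt_mul_of_sinr_ge_of_snr_lt hPT hγ hξ₂ hp.le h.1 h.2).le, h⟩⟩

variable [IsProbabilityMeasure μ] [IsProbabilityMeasure ν]

theorem measureReal_prod_decodedDespiteInterference (hPT : 0 < PT) (hNoise : 0 ≤ Noise)
    (hγ : 0 ≤ γ) (hξ₁ : 0 < ξ₁) (hξ₂ : 0 < ξ₂) (hμ : ∀ᵐ x ∂μ, 0 < x)
    (hφ : ∀ x, 0 < x → HasDerivAt (fun x => μ.real (Iio x)) (φ x) x) :
    (μ.prod ν).real (decodedDespiteInterference PT Noise γ ξ₁ ξ₂) =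
      ∫ x in 0..Noise * γ / (PT * ξ₁),
        (1 - ν.real (Iio (γ * (ξ₁ / ξ₂) * x + Noise * γ / (PT * ξ₂)))) * φ x := by
  rw [← measureReal_prod_le_and_lt hμ hφ (by positivity) (by fun_prop)]
  simp only [decodedDespiteInterference, snr_lt_iff hPT hξ₁, sinr_ge_iff hPT hξ₂]

theorem measureReal_prod_strongerOnlyDecoded (hPT : 0 < PT) (hNoise : 0 ≤ Noise) (hγ : 0 ≤ γ)
    (hξ₁ : 0 < ξ₁) (hξ₂ : 0 < ξ₂) (hμ : ∀ᵐ x ∂μ, 0 < x) (hν : ∀ᵐ y ∂ν, 0 < y)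
    (hφ : ∀ x, 0 < x → HasDerivAt (fun x => μ.real (Iio x)) (φ x) x)
    (hψ : ∀ y, 0 < y → HasDerivAt (fun y => ν.real (Iio y)) (ψ y) y) :
    (μ.prod ν).real
        (nearStrongerOnlyDecoded PT Noise γ ξ₁ ξ₂ ∪ farStrongerOnlyDecoded PT Noise γ ξ₁ ξ₂) =
      (∫ y in 0..Noise * γ / (PT * ξ₂),
        (1 - μ.real (Iio (γ * (ξ₂ / ξ₁) * y + Noise * γ / (PT * ξ₁)))) * ψ y) +
      ∫ x in 0..Noise * γ / (PT * ξ₁),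
        (1 - ν.real (Iio (γ * (ξ₁ / ξ₂) * x + Noise * γ / (PT * ξ₂)))) * φ x := by
  have hdisjoint : Disjoint (nearStrongerOnlyDecoded PT Noise γ ξ₁ ξ₂)
      (farStrongerOnlyDecoded PT Noise γ ξ₁ ξ₂) :=
    disjoint_left.2 fun _ hnear hfar => hnear.1.not_gt hfar.1
  have hswap := (Measure.measurePreserving_swap (μ := μ) (ν := ν)).measureReal_preimage
    (measurableSet_decodedDespiteInterference PT Noise γ ξ₂ ξ₁).nullMeasurableSet
  rw [measureReal_union hdisjoint (measurableSet_farStrongerOnlyDecoded PT Noise γ ξ₁ ξ₂),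
    measureReal_congr (nearStrongerOnlyDecoded_ae_eq hPT hγ hξ₂.le hν), hswap,
    measureReal_congr (farStrongerOnlyDecoded_ae_eq hPT hγ hξ₁.le hμ),
    measureReal_prod_decodedDespiteInterference hPT hNoise hγ hξ₂ hξ₁ hν hψ,
    measureReal_prod_decodedDespiteInterference hPT hNoise hγ hξ₁ hξ₂ hμ hφ]

end Decoding

section CompositeLaw

theorem measurable_gammaPDF (a r : ℝ) : Measurable (gammaPDF a r) :=
  (measurable_gammaPDFReal a r).ennreal_ofReal

theorem integral_gammaMeasure {a r : ℝ} (ha : 0 < a) (hr : 0 < r) (h : ℝ → ℝ) :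
    ∫ g, h g ∂gammaMeasure a r =
      ∫ g in Ioi 0, r ^ a * g ^ (a - 1) * Real.exp (-r * g) / Real.Gamma a * h g := by
  have hsupport : ∀ g ∉ Ici (0 : ℝ), gammaPDFReal a r g * h g = 0 := fun g hg => by
    rw [gammaPDFReal, if_neg (mem_Ici.not.1 hg), zero_mul]
  rw [gammaMeasure, integral_withDensity_eq_integral_toReal_smul (measurable_gammaPDF a r)
    (ae_of_all _ fun _ => ENNReal.ofReal_lt_top)]
  simp only [gammaPDF, ENNReal.toReal_ofReal (gammaPDFReal_nonneg ha hr _), smul_eq_mul]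
  rw [← setIntegral_eq_integral_of_forall_compl_eq_zero hsupport, integral_Ici_eq_integral_Ioi]
  refine setIntegral_congr_fun measurableSet_Ioi fun g hg => ?_
  simp only [gammaPDFReal, if_pos (mem_Ioi.1 hg).le, neg_mul]
  ring

theorem ae_pos_gammaMeasure (a r : ℝ) : ∀ᵐ g ∂gammaMeasure a r, 0 < g := by
  rw [gammaMeasure, ae_withDensity_iff (measurable_gammaPDF a r)]
  filter_upwards [Measure.ae_ne volume (0 : ℝ)] with g hg0 hg
  exact (not_lt.1 fun hneg => hg (gammaPDF_of_neg hneg)).lt_of_ne' hg0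

/-- The law of the distance to the centre of a uniform random point of the annulus
`Rl < r ≤ Ru`, with density `2r/(Ru² − Rl²)`. -/
noncomputable def annulusRadiusLaw (Rl Ru : ℝ) : Measure ℝ :=
  (volume.restrict (Ioc Rl Ru)).withDensity fun r => ENNReal.ofReal (2 * r / (Ru ^ 2 - Rl ^ 2))

/-- The joint density of the fading gain `g` and the distance `r`. -/
noncomputable def gainRadiusDensity (m Rl Ru g r : ℝ) : ℝ :=
  m ^ m * g ^ (m - 1) * Real.exp (-m * g) / Real.Gamma m * (2 * r / (Ru ^ 2 - Rl ^ 2))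

/-- The law of the composite variable `g² r^(-2α)`, for `g` Gamma distributed with shape and
rate `m` and `r` an independent annulus radius. -/
noncomputable def compositeLaw (m α Rl Ru : ℝ) : Measure ℝ :=
  ((gammaMeasure m m).prod (annulusRadiusLaw Rl Ru)).map fun p => p.1 ^ 2 * p.2 ^ (-(2 * α))

variable {m α Rl Ru : ℝ}

theorem annulusRadiusDensity_nonneg (hRl : 0 ≤ Rl) {r : ℝ} (hr : r ∈ Ioc Rl Ru) :
    0 ≤ 2 * r / (Ru ^ 2 - Rl ^ 2) := by
  have hr0 : 0 ≤ r := hRl.trans hr.1.le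
  have hsq : Rl ^ 2 ≤ Ru ^ 2 := pow_le_pow_left₀ hRl (hr.1.le.trans hr.2) 2
  exact div_nonneg (by positivity) (sub_nonneg.2 hsq)

theorem isProbabilityMeasure_annulusRadiusLaw (hRl : 0 ≤ Rl) (hR : Rl < Ru) :
    IsProbabilityMeasure (annulusRadiusLaw Rl Ru) := by
  have hsq : Ru ^ 2 - Rl ^ 2 ≠ 0 := (sub_pos.2 (pow_lt_pow_left₀ hR hRl two_ne_zero)).ne'
  constructor
  rw [annulusRadiusLaw, withDensity_apply _ MeasurableSet.univ, Measure.restrict_univ,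
    ← ofReal_integral_eq_lintegral_ofReal (Continuous.integrableOn_Ioc (by fun_prop))
      ((ae_restrict_iff' measurableSet_Ioc).2 <|
        ae_of_all _ fun _ => annulusRadiusDensity_nonneg hRl),
    ← intervalIntegral.integral_of_le hR.le, intervalIntegral.integral_div,
    intervalIntegral.integral_const_mul, integral_id, mul_div_cancel₀ _ two_ne_zero, div_self hsq,
    ENNReal.ofReal_one]

theorem integral_annulusRadiusLaw (hRl : 0 ≤ Rl) (hR : Rl ≤ Ru) (h : ℝ → ℝ) :
    ∫ r, h r ∂annulusRadiusLaw Rl Ru = ∫ r in Rl..Ru, 2 * r / (Ru ^ 2 - Rl ^ 2) * h r := by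
  rw [annulusRadiusLaw, integral_withDensity_eq_integral_toReal_smul (by fun_prop)
    (ae_of_all _ fun _ => ENNReal.ofReal_lt_top), intervalIntegral.integral_of_le hR]
  refine setIntegral_congr_fun measurableSet_Ioc fun r hr => ?_
  simp only [ENNReal.toReal_ofReal (annulusRadiusDensity_nonneg hRl hr), smul_eq_mul]

theorem ae_pos_annulusRadiusLaw (hRl : 0 ≤ Rl) : ∀ᵐ r ∂annulusRadiusLaw Rl Ru, 0 < r :=
  (withDensity_absolutelyContinuous _ _).ae_le <|
    (ae_restrict_iff' measurableSet_Ioc).2 <| ae_of_all _ fun _ hr => hRl.trans_lt hr.1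

theorem isProbabilityMeasure_compositeLaw (hm : 0 < m) (hRl : 0 ≤ Rl) (hR : Rl < Ru) :
    IsProbabilityMeasure (compositeLaw m α Rl Ru) := by
  have := isProbabilityMeasure_gammaMeasure hm hm
  have := isProbabilityMeasure_annulusRadiusLaw hRl hR
  exact Measure.isProbabilityMeasure_map (by fun_prop)

theorem ae_pos_compositeLaw (hRl : 0 ≤ Rl) : ∀ᵐ x ∂compositeLaw m α Rl Ru, 0 < x := by
  rw [compositeLaw, ae_map_iff (by fun_prop) measurableSet_Ioi]
  filter_upwards [Measure.quasiMeasurePreserving_fst.ae (ae_pos_gammaMeasure m m),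
    Measure.quasiMeasurePreserving_snd.ae (ae_pos_annulusRadiusLaw hRl)] with p hg hr
  positivity

theorem integral_compositeLaw (hm : 0 < m) (hRl : 0 ≤ Rl) (hR : Rl < Ru) {F : ℝ → ℝ}
    (hF : Integrable F (compositeLaw m α Rl Ru)) :
    ∫ x, F x ∂compositeLaw m α Rl Ru = ∫ g in Ioi 0, ∫ r in Rl..Ru,
      gainRadiusDensity m Rl Ru g r * F (g ^ 2 * r ^ (-(2 * α))) := by
  have := isProbabilityMeasure_gammaMeasure hm hm
  have := isProbabilityMeasure_annulusRadiusLaw hRl hR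
  have hX : Measurable fun p : ℝ × ℝ => p.1 ^ 2 * p.2 ^ (-(2 * α)) := by fun_prop
  rw [compositeLaw, integral_map hX.aemeasurable hF.aestronglyMeasurable,
    integral_prod (fun p => F (p.1 ^ 2 * p.2 ^ (-(2 * α)))) (hF.comp_measurable hX),
    integral_gammaMeasure hm hm]
  simp only [integral_annulusRadiusLaw hRl hR.le, gainRadiusDensity, mul_assoc,
    intervalIntegral.integral_const_mul]

theorem measureReal_compositeLaw (hm : 0 < m) (hRl : 0 ≤ Rl) (hR : Rl < Ru) {s : Set ℝ}
    (hs : MeasurableSet s) :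
    (compositeLaw m α Rl Ru).real s = ∫ g in Ioi 0, ∫ r in Rl..Ru,
      gainRadiusDensity m Rl Ru g r * s.indicator 1 (g ^ 2 * r ^ (-(2 * α))) := by
  have := isProbabilityMeasure_compositeLaw (α := α) hm hRl hR
  have hF : Integrable (s.indicator (1 : ℝ → ℝ)) (compositeLaw m α Rl Ru) :=
    (integrable_const (1 : ℝ)).indicator hs
  rw [← integral_indicator_one hs, integral_compositeLaw hm hRl hR hF]

theorem compositeCDF_eq_measureReal_Iio (hm : 0 < m) (hRl : 0 ≤ Rl) (hR : Rl < Ru) :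
    compositeCDF m α Rl Ru = fun x => (compositeLaw m α Rl Ru).real (Iio x) := by
  ext x
  simp only [measureReal_compositeLaw hm hRl hR measurableSet_Iio, compositeCDF,
    gainRadiusDensity, indicator_apply, mem_Iio, Pi.one_apply, mul_ite, mul_one, mul_zero]

theorem measureReal_compositeLaw_prod {m₁ m₂ α₁ α₂ Rl₁ Ru₁ Rl₂ Ru₂ : ℝ} (hm₁ : 0 < m₁)
    (hm₂ : 0 < m₂) (hRl₁ : 0 ≤ Rl₁) (hR₁ : Rl₁ < Ru₁) (hRl₂ : 0 ≤ Rl₂) (hR₂ : Rl₂ < Ru₂)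
    {s : Set (ℝ × ℝ)} (hs : MeasurableSet s) :
    ((compositeLaw m₁ α₁ Rl₁ Ru₁).prod (compositeLaw m₂ α₂ Rl₂ Ru₂)).real s =
      ∫ g₁ in Ioi 0, ∫ r₁ in Rl₁..Ru₁, ∫ g₂ in Ioi 0, ∫ r₂ in Rl₂..Ru₂,
        gainRadiusDensity m₁ Rl₁ Ru₁ g₁ r₁ * gainRadiusDensity m₂ Rl₂ Ru₂ g₂ r₂ *
          s.indicator 1 (g₁ ^ 2 * r₁ ^ (-(2 * α₁)), g₂ ^ 2 * r₂ ^ (-(2 * α₂))) := by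
  have := isProbabilityMeasure_compositeLaw (α := α₁) hm₁ hRl₁ hR₁
  have := isProbabilityMeasure_compositeLaw (α := α₂) hm₂ hRl₂ hR₂
  rw [measureReal_prod_eq_integral _ _ hs, integral_compositeLaw hm₁ hRl₁ hR₁
    (Measure.integrable_measure_prodMk_left hs (measure_ne_top _ _))]
  simp only [measureReal_compositeLaw hm₂ hRl₂ hR₂ (measurable_prodMk_left hs), mul_assoc,
    integral_const_mul, intervalIntegral.integral_const_mul]
  rfl

end CompositeLaw

theorem backcom_fading_region_division_p1_general
    {m₁ m₂ α₁ α₂ Rl₁ Ru₁ Rl₂ Ru₂ PT Noise γ ξ₁ ξ₂ κ : ℝ}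
    (hm₁ : 0 < m₁) (hm₂ : 0 < m₂) (hRl₁ : 0 ≤ Rl₁) (hR₁ : Rl₁ < Ru₁)
    (hRl₂ : 0 ≤ Rl₂) (hR₂ : Rl₂ < Ru₂) (hPT : 0 < PT) (hNoise : 0 ≤ Noise) (hγ : 0 ≤ γ)
    (hξ₁ : 0 < ξ₁) (hξ₂ : 0 < ξ₂) (hκ : κ = ξ₂ / ξ₁) {φA φB : ℝ → ℝ}
    (hφA : ∀ x, 0 < x → HasDerivAt (compositeCDF m₁ α₁ Rl₁ Ru₁) (φA x) x)
    (hφB : ∀ x, 0 < x → HasDerivAt (compositeCDF m₂ α₂ Rl₂ Ru₂) (φB x) x) :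
    (∫ g₁ in Ioi (0 : ℝ), ∫ r₁ in Rl₁..Ru₁, ∫ g₂ in Ioi (0 : ℝ), ∫ r₂ in Rl₂..Ru₂,
        if (ξ₂ * (g₂ ^ 2 * r₂ ^ (-(2 * α₂))) ≤ ξ₁ * (g₁ ^ 2 * r₁ ^ (-(2 * α₁))) ∧
              γ * (PT * ξ₂ * (g₂ ^ 2 * r₂ ^ (-(2 * α₂))) + Noise) ≤
                PT * ξ₁ * (g₁ ^ 2 * r₁ ^ (-(2 * α₁))) ∧
              PT * ξ₂ * (g₂ ^ 2 * r₂ ^ (-(2 * α₂))) < γ * Noise) ∨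
            (ξ₁ * (g₁ ^ 2 * r₁ ^ (-(2 * α₁))) < ξ₂ * (g₂ ^ 2 * r₂ ^ (-(2 * α₂))) ∧
              γ * (PT * ξ₁ * (g₁ ^ 2 * r₁ ^ (-(2 * α₁))) + Noise) ≤
                PT * ξ₂ * (g₂ ^ 2 * r₂ ^ (-(2 * α₂))) ∧
              PT * ξ₁ * (g₁ ^ 2 * r₁ ^ (-(2 * α₁))) < γ * Noise)
        then m₁ ^ m₁ * g₁ ^ (m₁ - 1) * Real.exp (-m₁ * g₁) / Real.Gamma m₁ *
            (2 * r₁ / (Ru₁ ^ 2 - Rl₁ ^ 2)) *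
            (m₂ ^ m₂ * g₂ ^ (m₂ - 1) * Real.exp (-m₂ * g₂) / Real.Gamma m₂ *
              (2 * r₂ / (Ru₂ ^ 2 - Rl₂ ^ 2)))
        else 0) =
      (∫ x in (0 : ℝ)..(Noise * γ / (PT * ξ₂)),
          (1 - compositeCDF m₁ α₁ Rl₁ Ru₁ (γ * κ * x + Noise * γ / (PT * ξ₁))) * φB x) +
        ∫ x in (0 : ℝ)..(Noise * γ / (PT * ξ₁)),
          (1 - compositeCDF m₂ α₂ Rl₂ Ru₂ (γ * x / κ + Noise * γ / (PT * ξ₂))) * φA x := by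
  have := isProbabilityMeasure_compositeLaw (α := α₁) hm₁ hRl₁ hR₁
  have := isProbabilityMeasure_compositeLaw (α := α₂) hm₂ hRl₂ hR₂
  have hκ_inv : ∀ x, γ * x / κ = γ * (ξ₁ / ξ₂) * x := fun x => by
    rw [hκ]
    field_simp
  rw [compositeCDF_eq_measureReal_Iio hm₁ hRl₁ hR₁] at hφA ⊢
  rw [compositeCDF_eq_measureReal_Iio hm₂ hRl₂ hR₂] at hφB ⊢
  simp only [hκ_inv]
  subst hκ
  rw [← measureReal_prod_strongerOnlyDecoded hPT hNoise hγ hξ₁ hξ₂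
      (ae_pos_compositeLaw hRl₁) (ae_pos_compositeLaw hRl₂) hφA hφB,
    measureReal_compositeLaw_prod hm₁ hm₂ hRl₁ hR₁ hRl₂ hR₂
      ((measurableSet_nearStrongerOnlyDecoded PT Noise γ ξ₁ ξ₂).union
        (measurableSet_farStrongerOnlyDecoded PT Noise γ ξ₁ ξ₂))]
  simp only [nearStrongerOnlyDecoded, farStrongerOnlyDecoded, gainRadiusDensity, indicator_apply,
    mem_union, mem_ofPred_eq, Pi.one_apply, mul_ite, mul_one, mul_zero]

/-- Region division with Nakagami-m fading. With `X₁ = g₁²·r₁^{−2α}`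
(near node) and `X₂ = g₂²·r₂^{−2α}` (far node) independent, `Φ^A, φ^A` the CDF and
density of `X₁` and `Φ^B, φ^B` those of `X₂`, the probability `p₁` that only the
instantaneously stronger signal is successfully decoded equals
`∫_0^{𝒩γ/(P_Tξ₂)} (1 − Φ^A(γκx + 𝒩γ/(P_Tξ₁))) φ^B(x) dx
 + ∫_0^{𝒩γ/(P_Tξ₁)} (1 − Φ^B(γx/κ + 𝒩γ/(P_Tξ₂))) φ^A(x) dx`.
`p₁` is expressed as the quadruple integral of the joint density of
`(g₁, r₁, g₂, r₂)` over the event. -/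
theorem backcom_fading_region_division_p1
    (m α R₁ R₂ R PT Noise γ ξ₁ ξ₂ κ : ℝ)
    (hm : 0 < m) (hα : 0 < α) (h0 : 0 < R₁) (h12 : R₁ < R₂) (h2R : R₂ < R)
    (hPT : 0 < PT) (hNoise : 0 < Noise) (hγ : 0 < γ)
    (hξ2 : 0 < ξ₂) (hξ21 : ξ₂ ≤ ξ₁) (hκ : κ = ξ₂ / ξ₁)
    (φA φB : ℝ → ℝ)
    (hφA : ∀ x : ℝ, 0 < x → HasDerivAt (compositeCDF m α R₁ R₂) (φA x) x)
    (hφB : ∀ x : ℝ, 0 < x → HasDerivAt (compositeCDF m α R₂ R) (φB x) x) :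
    (∫ g₁ in Set.Ioi (0 : ℝ), ∫ r₁ in R₁..R₂, ∫ g₂ in Set.Ioi (0 : ℝ), ∫ r₂ in R₂..R,
        if (ξ₂ * (g₂ ^ 2 * r₂ ^ (-(2 * α))) ≤ ξ₁ * (g₁ ^ 2 * r₁ ^ (-(2 * α))) ∧
              γ * (PT * ξ₂ * (g₂ ^ 2 * r₂ ^ (-(2 * α))) + Noise) ≤
                PT * ξ₁ * (g₁ ^ 2 * r₁ ^ (-(2 * α))) ∧
              PT * ξ₂ * (g₂ ^ 2 * r₂ ^ (-(2 * α))) < γ * Noise) ∨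
            (ξ₁ * (g₁ ^ 2 * r₁ ^ (-(2 * α))) < ξ₂ * (g₂ ^ 2 * r₂ ^ (-(2 * α))) ∧
              γ * (PT * ξ₁ * (g₁ ^ 2 * r₁ ^ (-(2 * α))) + Noise) ≤
                PT * ξ₂ * (g₂ ^ 2 * r₂ ^ (-(2 * α))) ∧
              PT * ξ₁ * (g₁ ^ 2 * r₁ ^ (-(2 * α))) < γ * Noise)
        then m ^ m * g₁ ^ (m - 1) * Real.exp (-m * g₁) / Real.Gamma m *
            (2 * r₁ / (R₂ ^ 2 - R₁ ^ 2)) *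
            (m ^ m * g₂ ^ (m - 1) * Real.exp (-m * g₂) / Real.Gamma m *
              (2 * r₂ / (R ^ 2 - R₂ ^ 2)))
        else 0) =
      (∫ x in (0 : ℝ)..(Noise * γ / (PT * ξ₂)),
          (1 - compositeCDF m α R₁ R₂ (γ * κ * x + Noise * γ / (PT * ξ₁))) * φB x) +
        ∫ x in (0 : ℝ)..(Noise * γ / (PT * ξ₁)),
          (1 - compositeCDF m α R₂ R (γ * x / κ + Noise * γ / (PT * ξ₂))) * φA x := by
  exact backcom_fading_region_division_p1_general hm hm h0.le h12 (h0.trans h12).le h2R hPT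
    hNoise.le hγ.le (hξ2.trans_le hξ21) hξ2 hκ hφA hφB
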